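/- Let K = k(x, y) be a radical function field with y^n = D ∈ k(x)^*, n coprime to char k, Y^n - D irreducible over k(x), and squarefree decomposition D = sgn(D)·∏_j f_j^j. Then the degree over k of the exact constant field k' of K equals gcd(n, {j ∈ ℤ : f_j ≠ 1}), and k' = k(sgn(D)^{1/[k':k]}) is generated over k by a [k':k]-th root of sgn(D). -/

import Mathlib

open Polynomial

lemma aux_transc (k : Type) [Field k] (K : Type) [Field K] [Algebra (RatFunc k) K] [Algebra k K]
    [IsScalarTower k (RatFunc k) K] :
    Transcendental (algebraicClosure k K) (algebraMap (RatFunc k) K RatFunc.X) := by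
  apply Transcendental.algebraicClosure
  exact (transcendental_algebraMap_iff (algebraMap (RatFunc k) K).injective).2
    RatFunc.transcendental_X

lemma aux_map_poly (k : Type) [Field k] (K : Type) [Field K] [Algebra (RatFunc k) K] [Algebra k K]
    [IsScalarTower k (RatFunc k) K] (p : k[X]) :
    algebraMap (RatFunc k) K (algebraMap k[X] (RatFunc k) p) =
      aeval (algebraMap (RatFunc k) K RatFunc.X) (p.map (algebraMap k (algebraicClosure k K))) := by
  rw [aeval_map_algebraMap, aeval_algebraMap_apply]
  congr 1
  rw [← RatFunc.algebraMap_X, aeval_algebraMap_apply, aeval_X_left_apply]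

lemma aux_linind (k : Type) [Field k] (K : Type) [Field K] [Algebra (RatFunc k) K] [Algebra k K]
    [IsScalarTower k (RatFunc k) K] {ι : Type*} (v : ι → algebraicClosure k K)
    (hv : LinearIndependent k v) : LinearIndependent (RatFunc k) (fun i => (v i : K)) := by
  let _ : Algebra k[X] K :=
    ((algebraMap (RatFunc k) K).comp (algebraMap k[X] (RatFunc k))).toAlgebra
  have _ : IsScalarTower k[X] (RatFunc k) K := IsScalarTower.of_algebraMap_eq fun _ => rfl
  rw [← LinearIndependent.iff_fractionRing k[X] (RatFunc k), linearIndependent_iff']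
  intro s p hp i hi
  have h0 : (∑ i ∈ s, (p i).map (algebraMap k (algebraicClosure k K)) * C (v i)) = 0 := by
    have := (transcendental_iff.1 (aux_transc k K))
    apply this
    rw [map_sum, ← hp]
    refine Finset.sum_congr rfl fun i _ => ?_
    rw [map_mul, ← aux_map_poly, aeval_C, Algebra.smul_def]
    rfl
  ext m
  have h1 := congrArg (fun q => coeff q m) h0
  simp only [finsetSum_coeff, coeff_mul_C, coeff_map, coeff_zero] at h1
  rw [linearIndependent_iff'] at hv
  rw [coeff_zero]
  refine hv s (fun i => (p i).coeff m) ?_ i hi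
  simpa [Algebra.smul_def] using h1

lemma aux_rootmult (k : Type) [Field k] (q : ℕ) [ExpChar k q] (f : k[X]) (hf : Squarefree f)
    (L : Type) [Field L] [Algebra k L] (α : L) (hα : aeval α f = 0) :
    ∃ m, rootMultiplicity α (f.map (algebraMap k L)) = q ^ m := by
  have hf0 : f ≠ 0 := hf.ne_zero
  have hint : IsIntegral k α := IsAlgebraic.isIntegral ⟨f, hf0, hα⟩
  obtain ⟨R, hR⟩ := minpoly.dvd k α hα
  have hirr := minpoly.irreducible hint
  have hRα : aeval α R ≠ 0 := by
    intro h
    obtain ⟨T, hT⟩ := minpoly.dvd k α h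
    exact hirr.not_isUnit (hf (minpoly k α) ⟨T, by rw [hR, hT, mul_assoc]⟩)
  obtain ⟨G, hG, m, hm⟩ := hirr.hasSeparableContraction q
  have _ : ExpChar L q := expChar_of_injective_algebraMap (algebraMap k L).injective q
  have h1 : rootMultiplicity α (f.map (algebraMap k L)) =
      rootMultiplicity α ((minpoly k α).map (algebraMap k L)) := by
    have h2 : f.map (algebraMap k L) ≠ 0 := (Polynomial.map_ne_zero_iff (algebraMap k L).injective).2 hf0
    have h3 : f.map (algebraMap k L) = (minpoly k α).map (algebraMap k L) * R.map (algebraMap k L) := by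
      rw [← Polynomial.map_mul, ← hR]
    rw [h3] at h2 ⊢
    rw [rootMultiplicity_mul h2, rootMultiplicity_eq_zero (p := R.map _), add_zero]
    simpa [IsRoot, eval_map_algebraMap] using hRα
  refine ⟨m, ?_⟩
  have hsep : (G.map (algebraMap k L)).Separable := hG.map
  have hroot : IsRoot (G.map (algebraMap k L)) (α ^ q ^ m) := by
    have := minpoly.aeval k α
    rw [← hm, expand_aeval] at this
    simpa [IsRoot, eval_map_algebraMap] using this
  rw [h1, ← hm, map_expand, rootMultiplicity_expand_pow]
  have h4 := rootMultiplicity_le_one_of_separable hsep (α ^ q ^ m)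
  have h5 := (rootMultiplicity_pos hsep.ne_zero).2 hroot
  rw [show rootMultiplicity (α ^ q ^ m) (G.map (algebraMap k L)) = 1 by omega, mul_one]

lemma aux_rm_pow {L : Type} [Field L] (α : L) (A : L[X]) (e : ℕ) :
    rootMultiplicity α (A ^ e) = e * rootMultiplicity α A := by
  classical
  rw [← count_roots, ← count_roots, roots_pow, Multiset.count_nsmul]

lemma aux_rm_prod {L : Type} [Field L] (α : L) (F : ℤ → L[X]) (S : Finset ℤ) (a : ℤ → ℕ) (j₀ : ℤ)
    (hj : j₀ ∈ S) (hF0 : ∀ j, F j ≠ 0) (hF : ∀ j, j ≠ j₀ → eval α (F j) ≠ 0) :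
    rootMultiplicity α (∏ j ∈ S, F j ^ a j) = a j₀ * rootMultiplicity α (F j₀) := by
  have h0 : ∏ j ∈ S, F j ^ a j ≠ 0 := Finset.prod_ne_zero_iff.2 fun j _ => pow_ne_zero _ (hF0 j)
  rw [← Finset.mul_prod_erase _ _ hj] at h0 ⊢
  rw [rootMultiplicity_mul h0, aux_rm_pow, rootMultiplicity_eq_zero (p := ∏ _ ∈ _, _), add_zero]
  rw [IsRoot, eval_prod, Finset.prod_eq_zero_iff]
  push Not
  intro j hj'
  rw [eval_pow]
  exact pow_ne_zero _ (hF j (Finset.ne_of_mem_erase hj'))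

lemma aux_val {L : Type} [Field L] (α : L) (F : ℤ → L[X]) (S : Finset ℤ) (j₀ : ℤ)
    (hj : j₀ ∈ S) (hF0 : ∀ j, F j ≠ 0) (hF : ∀ j, j ≠ j₀ → eval α (F j) ≠ 0)
    (A B : L[X]) (hA : A ≠ 0) (hB : B ≠ 0) (c : L) (hc : c ≠ 0) (e : ℕ)
    (h : A ^ e * ∏ j ∈ S, F j ^ (-j).toNat = C c * (B ^ e * ∏ j ∈ S, F j ^ j.toNat)) :
    (e : ℤ) ∣ j₀ * rootMultiplicity α (F j₀) := by
  have hp : ∀ a : ℤ → ℕ, ∏ j ∈ S, F j ^ a j ≠ 0 := fun a =>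
    Finset.prod_ne_zero_iff.2 fun j _ => pow_ne_zero _ (hF0 j)
  have h1 := congrArg (rootMultiplicity α) h
  have hne : B ^ e * ∏ j ∈ S, F j ^ j.toNat ≠ 0 := mul_ne_zero (pow_ne_zero _ hB) (hp _)
  rw [rootMultiplicity_mul (mul_ne_zero (pow_ne_zero _ hA) (hp _)),
    rootMultiplicity_mul (mul_ne_zero (C_ne_zero.2 hc) hne), rootMultiplicity_mul hne,
    rootMultiplicity_C, aux_rm_pow, aux_rm_pow, aux_rm_prod α F S _ j₀ hj hF0 hF,
    aux_rm_prod α F S _ j₀ hj hF0 hF] at h1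
  generalize rootMultiplicity α (F j₀) = r at *
  refine ⟨rootMultiplicity α A - rootMultiplicity α B, ?_⟩
  have h2 : (j₀ : ℤ) = j₀.toNat - (-j₀).toNat := by omega
  zify at h1
  rw [h2]
  simp only [Int.ofNat_toNat] at *
  linear_combination -h1

lemma aux_power_dvd (k : Type) [Field k] (q : ℕ) [ExpChar k q]
    (f : ℤ → Polynomial k) (S : Finset ℤ) (hfS : ∀ j ∉ S, f j = 1)
    (hmonic : ∀ j, (f j).Monic) (hsqfree : ∀ j, Squarefree (f j))
    (hcop : ∀ j₁ j₂, j₁ ≠ j₂ → IsCoprime (f j₁) (f j₂))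
    (sgn : k) (hsgn : sgn ≠ 0)
    (D : RatFunc k)
    (hDdecomp : D = RatFunc.C sgn *
      ∏ j ∈ S, (algebraMap (Polynomial k) (RatFunc k) (f j)) ^ j)
    (K : Type) [Field K] [Algebra (RatFunc k) K] [Algebra k K]
    [IsScalarTower k (RatFunc k) K] (e : ℕ) (he : 0 < e) (heq : Nat.Coprime e q) (w : K)
    (hw : w ^ e = algebraMap (RatFunc k) K D)
    (A B : (algebraicClosure k K)[X])
    (hAB : w = aeval (algebraMap (RatFunc k) K RatFunc.X) A /
      aeval (algebraMap (RatFunc k) K RatFunc.X) B) (j₀ : ℤ) (hj₀ : f j₀ ≠ 1) :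
    (e : ℤ) ∣ j₀ := by
  have htr := transcendental_iff.1 (aux_transc k K)
  have hj : j₀ ∈ S := by
    by_contra h
    exact hj₀ (hfS _ h)
  have hf0 : ∀ j, f j ≠ 0 := fun j => (hmonic j).ne_zero
  have hg0 : ∀ j, algebraMap k[X] (RatFunc k) (f j) ≠ 0 := fun j =>
    RatFunc.algebraMap_ne_zero (hf0 j)
  have hD0 : D ≠ 0 := by
    rw [hDdecomp]
    refine mul_ne_zero ?_ (Finset.prod_ne_zero_iff.2 fun j _ => zpow_ne_zero _ (hg0 j))
    simpa using hsgn
  have hw0 : w ≠ 0 := by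
    rintro rfl
    rw [zero_pow he.ne', eq_comm, map_eq_zero] at hw
    exact hD0 hw
  have hA' : aeval (algebraMap (RatFunc k) K RatFunc.X) A ≠ 0 := by
    intro h; rw [h, zero_div] at hAB; exact hw0 hAB
  have hB' : aeval (algebraMap (RatFunc k) K RatFunc.X) B ≠ 0 := by
    intro h; rw [h, div_zero] at hAB; exact hw0 hAB
  have hA : A ≠ 0 := by rintro rfl; simp at hA'
  have hB : B ≠ 0 := by rintro rfl; simp at hB'
  -- polynomial identity
  have hDD : D * ∏ j ∈ S, (algebraMap k[X] (RatFunc k) (f j)) ^ (-j).toNat =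
      RatFunc.C sgn * ∏ j ∈ S, (algebraMap k[X] (RatFunc k) (f j)) ^ j.toNat := by
    rw [hDdecomp, mul_assoc, ← Finset.prod_mul_distrib]
    congr 1
    refine Finset.prod_congr rfl fun j _ => ?_
    rw [← zpow_natCast, ← zpow_natCast, ← zpow_add₀ (hg0 j)]
    congr 1
    omega
  have hid : A ^ e * ∏ j ∈ S, ((f j).map (algebraMap k (algebraicClosure k K))) ^ (-j).toNat =
      C (algebraMap k (algebraicClosure k K) sgn) *
      (B ^ e * ∏ j ∈ S, ((f j).map (algebraMap k (algebraicClosure k K))) ^ j.toNat) := by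
    rw [← sub_eq_zero]
    apply htr
    rw [map_sub, sub_eq_zero]
    have h1 := congrArg (algebraMap (RatFunc k) K) hDD
    simp only [map_mul, map_prod, map_pow, aux_map_poly, aeval_C] at h1 ⊢
    rw [← hw, hAB, div_pow] at h1
    have h2 : algebraMap (RatFunc k) K (RatFunc.C sgn) =
      algebraMap (algebraicClosure k K) K (algebraMap k (algebraicClosure k K) sgn) := by
      rw [← IsScalarTower.algebraMap_apply, ← RatFunc.algebraMap_eq_C,
        ← IsScalarTower.algebraMap_apply]
    rw [h2] at h1
    field_simp at h1
    linear_combination h1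
  let L := AlgebraicClosure (algebraicClosure k K)
  let φ : algebraicClosure k K →+* L := algebraMap _ _
  have hφ : φ.comp (algebraMap k (algebraicClosure k K)) = algebraMap k L :=
    (IsScalarTower.algebraMap_eq k (algebraicClosure k K) L).symm
  have hdeg : (f j₀).degree ≠ 0 := fun h => hj₀ ((hmonic j₀).degree_le_zero_iff_eq_one.1 h.le)
  obtain ⟨α, hα⟩ := IsAlgClosed.exists_aeval_eq_zero L (f j₀) hdeg
  obtain ⟨m, hm⟩ := aux_rootmult k q (f j₀) (hsqfree j₀) L α hα
  have hid2 := congrArg (Polynomial.map φ) hid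
  simp only [Polynomial.map_mul, Polynomial.map_pow, Polynomial.map_prod, Polynomial.map_map, hφ,
    Polynomial.map_C] at hid2
  have hfin := aux_val α (fun j => (f j).map (algebraMap k L)) S j₀ hj
    (fun j => ((hmonic j).map _).ne_zero) (fun j hjj => by
      obtain ⟨u, v, huv⟩ := hcop j j₀ hjj
      intro h
      rw [eval_map_algebraMap] at h
      have := congrArg (aeval α) huv
      simp [h, hα] at this) (A.map φ) (B.map φ)
    ((Polynomial.map_ne_zero_iff φ.injective).2 hA) ((Polynomial.map_ne_zero_iff φ.injective).2 hB)
    _ (by simpa using hsgn) e hid2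
  simp only [hm] at hfin
  refine IsCoprime.dvd_of_dvd_mul_right ?_ hfin
  exact_mod_cast Nat.isCoprime_iff_coprime.2 (heq.pow_right m)

theorem stmt18 (k : Type) [Field k] [DecidableEq (Polynomial k)] (n : ℕ) (hn : 1 < n) (hchar : (n : k) ≠ 0)
    (f : ℤ → Polynomial k) (S : Finset ℤ) (hfS : ∀ j ∉ S, f j = 1)
    (hmonic : ∀ j, (f j).Monic) (hsqfree : ∀ j, Squarefree (f j))
    (hcop : ∀ j₁ j₂, j₁ ≠ j₂ → IsCoprime (f j₁) (f j₂))
    (sgn : k) (hsgn : sgn ≠ 0)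
    (D : RatFunc k)
    (hDdecomp : D = RatFunc.C sgn *
      ∏ j ∈ S, (algebraMap (Polynomial k) (RatFunc k) (f j)) ^ j)
    (hirr : Irreducible ((Polynomial.X : Polynomial (RatFunc k)) ^ n - Polynomial.C D))
    (K : Type) [Field K] [Algebra (RatFunc k) K] [Algebra k K]
    [IsScalarTower k (RatFunc k) K]
    (y : K) (hy : y ^ n = algebraMap (RatFunc k) K D)
    (hgen : Algebra.adjoin (RatFunc k) {y} = ⊤)
    -- `g = gcd(n, j | f_j ≠ 1)`
    (g : ℕ) (hg : g = Nat.gcd n ((S.filter fun j => f j ≠ 1).gcd Int.natAbs)) :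
    Module.finrank k (integralClosure k K) = g ∧
    ∃ t : K, t ^ g = algebraMap k K sgn ∧
      Algebra.adjoin k {t} = integralClosure k K := by
  have hn0 : 0 < n := by omega
  have hgn : g ∣ n := hg ▸ Nat.gcd_dvd_left _ _
  have hg0 : 0 < g := Nat.pos_of_dvd_of_pos hgn hn0
  have hgj : ∀ j, f j ≠ 1 → (g : ℤ) ∣ j := by
    intro j hj
    have hjS : j ∈ S := by
      by_contra h
      exact hj (hfS _ h)
    rw [Int.natCast_dvd, hg]
    exact (Nat.gcd_dvd_right _ _).trans (Finset.gcd_dvd (Finset.mem_filter.2 ⟨hjS, hj⟩))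
  have hf0 : ∀ j, algebraMap k[X] (RatFunc k) (f j) ≠ 0 := fun j =>
    RatFunc.algebraMap_ne_zero (hmonic j).ne_zero
  have hD0 : D ≠ 0 := by
    rw [hDdecomp]
    refine mul_ne_zero ?_ (Finset.prod_ne_zero_iff.2 fun j _ => zpow_ne_zero _ (hf0 j))
    simpa using hsgn
  have hy0 : y ≠ 0 := by
    rintro rfl
    rw [zero_pow hn0.ne', eq_comm, map_eq_zero] at hy
    exact hD0 hy
  -- `D = sgn * h ^ g`
  obtain ⟨h, hh0, hDh⟩ : ∃ h : RatFunc k, h ≠ 0 ∧ D = RatFunc.C sgn * h ^ g := by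
    refine ⟨∏ j ∈ S, (algebraMap k[X] (RatFunc k) (f j)) ^ (j / g),
      Finset.prod_ne_zero_iff.2 fun j _ => zpow_ne_zero _ (hf0 j), ?_⟩
    rw [hDdecomp, ← Finset.prod_pow]
    congr 1
    refine Finset.prod_congr rfl fun j _ => ?_
    by_cases hj : f j = 1
    · simp [hj]
    · rw [← zpow_natCast, ← zpow_mul, Int.ediv_mul_cancel (hgj j hj)]
  -- degree of K
  have hymin : minpoly (RatFunc k) y = X ^ n - C D :=
    (minpoly.eq_of_irreducible_of_monic hirr (by simp [hy]) (monic_X_pow_sub_C D hn0.ne')).symm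
  have hyint : IsIntegral (RatFunc k) y :=
    ⟨X ^ n - C D, monic_X_pow_sub_C D hn0.ne', by simp [hy]⟩
  have hytop : IntermediateField.adjoin (RatFunc k) {y} = ⊤ := by
    rw [← IntermediateField.toSubalgebra_inj,
      IntermediateField.adjoin_simple_toSubalgebra_of_isAlgebraic hyint.isAlgebraic, hgen]
    rfl
  have hKn : Module.finrank (RatFunc k) K = n := by
    rw [← IntermediateField.finrank_top', ← hytop, IntermediateField.adjoin.finrank hyint, hymin,
      natDegree_X_pow_sub_C]
  have hfinK : FiniteDimensional (RatFunc k) K := Module.finite_of_finrank_pos (by omega)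
  -- the constant field
  let k' := algebraicClosure k K
  let x : K := algebraMap (RatFunc k) K RatFunc.X
  let E : IntermediateField (RatFunc k) K :=
    { (IntermediateField.adjoin k' {x}).toSubfield with
      algebraMap_mem' := by
        intro r
        change algebraMap (RatFunc k) K r ∈ IntermediateField.adjoin k' {x}
        rw [IntermediateField.mem_adjoin_simple_iff]
        refine ⟨r.num.map (algebraMap k k'), r.denom.map (algebraMap k k'), ?_⟩
        rw [← aux_map_poly, ← aux_map_poly, ← map_div₀, RatFunc.num_div_denom] }
  have hEmem : ∀ z : K, z ∈ E ↔ z ∈ IntermediateField.adjoin k' {x} := fun z => Iff.rfl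
  have hk'E : ∀ z : k', (z : K) ∈ E := fun z =>
    (hEmem _).2 ((IntermediateField.adjoin k' {x}).algebraMap_mem z)
  -- rank comparison
  have hrank : Module.rank k k' ≤ Module.rank (RatFunc k) E := by
    let b := Module.Basis.ofVectorSpace k k'
    have hb := aux_linind k K b b.linearIndependent
    have hb' : LinearIndependent (RatFunc k) (fun i => (⟨b i, hk'E _⟩ : E)) :=
      LinearIndependent.of_comp E.val.toLinearMap hb
    rw [← b.mk_eq_rank'']
    exact hb'.cardinal_le_rank
  have hfink' : FiniteDimensional k k' := by
    refine Module.rank_lt_aleph0_iff.1 (lt_of_le_of_lt hrank ?_)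
    exact Module.rank_lt_aleph0 _ _
  have hfr : Module.finrank k k' ≤ Module.finrank (RatFunc k) E :=
    Cardinal.toNat_le_toNat hrank (Module.rank_lt_aleph0 _ _)
  -- norm argument
  have hmul : Module.finrank (RatFunc k) E * Module.finrank E K = n := by
    rw [Module.finrank_mul_finrank, hKn]
  set e := Module.finrank (RatFunc k) E with he
  set r := Module.finrank E K with hr
  have he0 : 0 < e := Nat.pos_of_ne_zero (by rintro h; rw [h] at hmul; omega)
  have hyr : y ^ r ∈ E := by
    let c : E := Algebra.norm E y
    have hc : (c : K) ^ n = (y ^ r) ^ n := by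
      have h1 : c ^ n = (algebraMap (RatFunc k) E D) ^ r := by
        rw [← map_pow, hy, IsScalarTower.algebraMap_apply (RatFunc k) E K, Algebra.norm_algebraMap]
      have h2 := congrArg (algebraMap E K) h1
      rw [map_pow, map_pow, ← IsScalarTower.algebraMap_apply, ← hy] at h2
      rw [← pow_mul, mul_comm r n, pow_mul, ← h2]
      rfl
    have hyr0 : y ^ r ≠ 0 := pow_ne_zero _ hy0
    have hc0 : (c : K) ≠ 0 := by
      intro h; rw [h, zero_pow hn0.ne'] at hc; exact pow_ne_zero n hyr0 hc.symm
    have hζ : (y ^ r / c) ^ n = 1 := by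
      rw [div_pow, hc, div_self (pow_ne_zero _ hyr0)]
    have hζ' : y ^ r / c ∈ k' := by
      rw [mem_algebraicClosure_iff']
      exact IsIntegral.of_pow hn0 (by rw [hζ]; exact isIntegral_one)
    have : y ^ r = (y ^ r / c) * c := by field_simp
    rw [this]
    exact E.mul_mem (hk'E ⟨_, hζ'⟩) c.2
  have hwe : (y ^ r) ^ e = algebraMap (RatFunc k) K D := by
    rw [← pow_mul, mul_comm, hmul, hy]
  have hedvd : e ∣ g := by
    rw [hg]
    refine Nat.dvd_gcd ⟨r, hmul.symm⟩ (Finset.dvd_gcd fun j hj => ?_)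
    rw [← Int.natCast_dvd]
    obtain ⟨A, B, hAB⟩ := (IntermediateField.mem_adjoin_simple_iff k' _).1 ((hEmem _).1 hyr)
    obtain ⟨q, hq⟩ := ExpChar.exists k
    refine aux_power_dvd k q f S hfS hmonic hsqfree hcop sgn hsgn D hDdecomp K e he0 ?_ _ hwe A B hAB
      j (Finset.mem_filter.1 hj).2
    have hnq : Nat.Coprime n q := by
      cases hq with
      | zero => exact Nat.coprime_one_right n
      | prime hp =>
        rw [Nat.coprime_comm, hp.coprime_iff_not_dvd]
        intro hd
        exact hchar ((CharP.cast_eq_zero_iff k q n).2 hd)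
    exact Nat.Coprime.coprime_dvd_left ⟨r, hmul.symm⟩ hnq
  -- the root t
  obtain ⟨s, hs⟩ := hgn
  let z : K := y ^ s
  have hh0' : algebraMap (RatFunc k) K h ≠ 0 := by simpa using hh0
  let t : K := z / algebraMap (RatFunc k) K h
  have hzg : z ^ g = algebraMap (RatFunc k) K D := by
    rw [← hy, ← pow_mul, hs, mul_comm]
  have htg : t ^ g = algebraMap k K sgn := by
    rw [div_pow, hzg, hDh, map_mul, map_pow, mul_div_assoc, div_self (pow_ne_zero _ hh0'), mul_one,
      ← RatFunc.algebraMap_eq_C, ← IsScalarTower.algebraMap_apply]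
  have htint : IsIntegral k t := IsIntegral.of_pow hg0 (by rw [htg]; exact isIntegral_algebraMap)
  have hs0 : s ≠ 0 := by rintro rfl; omega
  have hirrg : Irreducible (X ^ g - C D : (RatFunc k)[X]) := by
    apply of_irreducible_expand hs0
    have : expand (RatFunc k) s (X ^ g - C D) = X ^ n - C D := by
      rw [map_sub, map_pow, expand_X, expand_C, ← pow_mul, hs, mul_comm]
    rwa [this]
  have hzmin : minpoly (RatFunc k) z = X ^ g - C D :=
    (minpoly.eq_of_irreducible_of_monic hirrg (by simp [hzg]) (monic_X_pow_sub_C D hg0.ne')).symm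
  have hgle : g ≤ (minpoly k t).natDegree := by
    let P := scaleRoots ((minpoly k t).map (algebraMap k (RatFunc k))) h
    have hP : aeval z P = 0 := by
      have h1 : aeval (algebraMap (RatFunc k) K h * t) P = 0 := by
        apply scaleRoots_aeval_eq_zero
        rw [aeval_map_algebraMap, minpoly.aeval]
      have h2 : algebraMap (RatFunc k) K h * t = z := mul_div_cancel₀ _ hh0'
      rwa [h2] at h1
    have hPm : P.Monic := (monic_scaleRoots_iff h).2 ((minpoly.monic htint).map _)
    have := natDegree_le_of_dvd (minpoly.dvd _ _ hP) hPm.ne_zero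
    rw [hzmin, natDegree_X_pow_sub_C, natDegree_scaleRoots, natDegree_map] at this
    exact this
  have htk : IntermediateField.adjoin k {t} ≤ k' := by
    rw [IntermediateField.adjoin_simple_le_iff]
    exact mem_algebraicClosure_iff'.2 htint
  have hfrt : Module.finrank k (IntermediateField.adjoin k {t}) = (minpoly k t).natDegree :=
    IntermediateField.adjoin.finrank htint
  have hle2 : Module.finrank k (IntermediateField.adjoin k {t}) ≤ Module.finrank k k' :=
    LinearMap.finrank_le_finrank_of_injective (f := (IntermediateField.inclusion htk).toLinearMap)
      (IntermediateField.inclusion htk).injective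
  have heg : e ≤ g := Nat.le_of_dvd hg0 hedvd
  have heq : IntermediateField.adjoin k {t} = k' :=
    IntermediateField.eq_of_le_of_finrank_le htk (by omega)
  refine ⟨?_, t, htg, ?_⟩
  · have : Module.finrank k k' = g := by omega
    exact this
  · rw [← IntermediateField.adjoin_simple_toSubalgebra_of_isAlgebraic htint.isAlgebraic, heq]
    rfl
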